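/- Let E ∈ GL(m,k) and F ∈ GL(n,k) with m ≥ 2 and n ≥ 2. If tr(E·ᵀE⁻¹) = tr(F·ᵀF⁻¹), then the algebra B(E,F) is non-zero, i.e. 1 ≠ 0 in B(E,F). -/

import Mathlib

open scoped TensorProduct
open Matrix

noncomputable section

variable (k : Type) [Field k]

/-- The matrix of free generators of the free algebra on `Fin m × Fin n`. -/
def gens (m n : ℕ) : Matrix (Fin m) (Fin n) (FreeAlgebra k (Fin m × Fin n)) :=
  Matrix.of fun i j => FreeAlgebra.ι k (i, j)

/-- A scalar matrix viewed as a matrix over a `k`-algebra. -/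
def liftMat {A : Type} [Semiring A] [Algebra k A] {p q : ℕ}
    (M : Matrix (Fin p) (Fin q) k) : Matrix (Fin p) (Fin q) A :=
  M.map (algebraMap k A)

/-- The defining relations of the algebra `B(E,F)`:
`F⁻¹ * ᵀz * E * z = 1` and `z * F⁻¹ * ᵀz * E = 1`. -/
inductive BRel {m n : ℕ} (E : Matrix (Fin m) (Fin m) k) (F : Matrix (Fin n) (Fin n) k) :
    FreeAlgebra k (Fin m × Fin n) → FreeAlgebra k (Fin m × Fin n) → Prop
  | left (i j : Fin n) : BRel E F
      ((liftMat k (A := FreeAlgebra k (Fin m × Fin n)) F⁻¹ * (gens k m n)ᵀ *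
          liftMat k (A := FreeAlgebra k (Fin m × Fin n)) E * gens k m n :
          Matrix (Fin n) (Fin n) (FreeAlgebra k (Fin m × Fin n))) i j)
      ((1 : Matrix (Fin n) (Fin n) (FreeAlgebra k (Fin m × Fin n))) i j)
  | right (i j : Fin m) : BRel E F
      ((gens k m n * liftMat k (A := FreeAlgebra k (Fin m × Fin n)) F⁻¹ * (gens k m n)ᵀ *
          liftMat k (A := FreeAlgebra k (Fin m × Fin n)) E :
          Matrix (Fin m) (Fin m) (FreeAlgebra k (Fin m × Fin n))) i j)
      ((1 : Matrix (Fin m) (Fin m) (FreeAlgebra k (Fin m × Fin n))) i j)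

/-- The algebra `B(E,F)`.  The Hopf algebra `B(E)` is `BB k E E`. -/
abbrev BB {m n : ℕ} (E : Matrix (Fin m) (Fin m) k) (F : Matrix (Fin n) (Fin n) k) :=
  RingQuot (BRel k E F)

/-- The matrix of generators of `B(E,F)`. -/
def ZMat {m n : ℕ} (E : Matrix (Fin m) (Fin m) k) (F : Matrix (Fin n) (Fin n) k) :
    Matrix (Fin m) (Fin n) (BB k E F) :=
  Matrix.of fun i j => RingQuot.mkAlgHom k (BRel k E F) (gens k m n i j)

/-!
Points of `B(E,F)` in an algebra can be multiplied and inverted, so non-vanishing of `B(E,F)` is an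
equivalence relation on invertible matrices. It descends along field extensions, so `k` may be taken
algebraically closed. Then `tr(E · ᵀE⁻¹) = -(q + q⁻¹)` for some `q ≠ 0`, and it suffices to see that
`B(E, E_q)` is non-zero, where `E_q` is the matrix of the quantum group `SL_q(2)`.

If the bilinear form `E` has isotropic vectors `u`, `v` with `E(u, v) ≠ 0`, a non-zero
representation of `B(E, E_q)` is found among the functions of words: one column of the generic
matrix acts by annihilation operators, the other by `q`-deformed creation operators, where `u` gives
the action of the creation operators at the empty word and `v` gives a vector satisfying the
relations. The trace condition is what makes the remaining relations consistent. If there is no such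
pair, `E` is congruent to a `2 × 2` Jordan form, so that `q = 1`, and weighted shifts on `ℤ → K`
represent the algebra.
-/

section EvalForm

variable {K A ι : Type*} [CommRing K] [Semiring A] [Algebra K A] [Fintype ι]

/-- The bilinear form with Gram matrix `E`, evaluated at vectors with entries in a possibly
noncommutative `K`-algebra. -/
def evalForm (E : Matrix ι ι K) (v w : ι → A) : A := ∑ a, ∑ b, E a b • (v a * w b)

theorem op_evalForm (E : Matrix ι ι K) (v w : ι → A) :
    MulOpposite.op (evalForm E v w) =
      evalForm Eᵀ (fun a => MulOpposite.op (w a)) (fun a => MulOpposite.op (v a)) := by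
  simp only [evalForm, Finset.op_sum, MulOpposite.op_smul, MulOpposite.op_mul, transpose_apply]
  exact Finset.sum_comm

theorem toBilin'_eq_evalForm [DecidableEq ι] (E : Matrix ι ι K) (u v : ι → K) :
    Matrix.toBilin' E u v = evalForm E u v := by
  simp [toBilin'_apply, evalForm, mul_assoc, mul_left_comm]

theorem evalForm_restrict_apply {V : Type*} [AddCommMonoid V] [Module K V] (E : Matrix ι ι K)
    {S : Submodule K V} {v w : ι → Module.End K V}
    (hv : ∀ a, ∀ f ∈ S, v a f ∈ S) (hw : ∀ a, ∀ f ∈ S, w a f ∈ S) (f : S) :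
    (evalForm E (fun a => (v a).restrict (hv a)) (fun a => (w a).restrict (hw a)) f : V) =
      evalForm E v w f := by
  simp [evalForm, LinearMap.sum_apply]

section QCommutation

variable [DecidableEq ι] {E : Matrix ι ι K} {q : K} {x y : ι → A}

theorem mul_evalForm_of_qCommute (hE : IsUnit E.det)
    (hxy : ∀ a b, x a * y b = algebraMap K A (E⁻¹ a b) + q • (y a * x b)) (c : ι) (v : ι → A) :
    x c * evalForm E y v = v c + q • (y c * evalForm E x v) := by
  have hinv (b : ι) : ∑ a, E a b * E⁻¹ c a = (1 : Matrix ι ι K) c b := by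
    rw [← nonsing_inv_mul _ hE, Matrix.mul_apply]
    exact Finset.sum_congr rfl fun a _ => mul_comm _ _
  have hv : ∑ a, ∑ b, (E a b * E⁻¹ c a) • v b = v c := by
    rw [Finset.sum_comm]
    simp only [← Finset.sum_smul, hinv, one_apply, ite_smul, one_smul, zero_smul, Finset.sum_ite_eq,
      Finset.mem_univ, if_true]
  calc x c * evalForm E y v
      = ∑ a, ∑ b, ((E a b * E⁻¹ c a) • v b + q • (y c * E a b • (x a * v b))) := by
        simp only [evalForm, Finset.mul_sum, mul_smul_comm, ← mul_assoc, hxy, add_mul, smul_add,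
          ← Algebra.smul_def, smul_smul, smul_mul_assoc, mul_comm q]
    _ = v c + q • (y c * evalForm E x v) := by
        simp only [Finset.sum_add_distrib, hv, evalForm, Finset.mul_sum, Finset.smul_sum]

theorem evalForm_mul_of_qCommute (hE : IsUnit E.det)
    (hxy : ∀ a b, x a * y b = algebraMap K A (E⁻¹ a b) + q • (y a * x b)) (c : ι) (v : ι → A) :
    evalForm E v x * y c = v c + q • (evalForm E v y * x c) := by
  have hv : ∑ a, ∑ b, (E a b * E⁻¹ b c) • v a = v c := by
    simp only [← Finset.sum_smul, ← Matrix.mul_apply, mul_nonsing_inv _ hE, one_apply, ite_smul,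
      one_smul, zero_smul, Finset.sum_ite_eq', Finset.mem_univ, if_true]
  calc evalForm E v x * y c
      = ∑ a, ∑ b, ((E a b * E⁻¹ b c) • v a + q • (E a b • (v a * y b) * x c)) := by
        simp only [evalForm, Finset.sum_mul, smul_mul_assoc, mul_assoc, hxy, mul_add, smul_add,
          ← Algebra.commutes, ← Algebra.smul_def, smul_smul, mul_smul_comm, mul_comm q]
    _ = v c + q • (evalForm E v y * x c) := by
        simp only [Finset.sum_add_distrib, hv, evalForm, Finset.sum_mul, Finset.smul_sum]

theorem evalForm_swap_of_qCommute
    (hxy : ∀ a b, x a * y b = algebraMap K A (E⁻¹ a b) + q • (y a * x b)) :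
    evalForm E x y = algebraMap K A (E * E⁻¹ᵀ).trace + q • evalForm E y x := by
  simp only [evalForm, hxy, smul_add, Finset.sum_add_distrib, trace, diag_apply, Matrix.mul_apply,
    transpose_apply, map_sum, map_mul, ← Algebra.smul_def, Finset.smul_sum, smul_comm q]

end QCommutation

end EvalForm

section LiftMat

variable {k} {A C : Type} [Semiring A] [Algebra k A] [Semiring C] [Algebra k C] {p q s : ℕ}

theorem liftMat_one : liftMat k (1 : Matrix (Fin p) (Fin p) k) = (1 : Matrix _ _ A) := by
  simp [liftMat]

theorem liftMat_mul (M : Matrix (Fin p) (Fin q) k) (N : Matrix (Fin q) (Fin s) k) :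
    liftMat k (A := A) (M * N) = liftMat k (A := A) M * liftMat k (A := A) N :=
  Matrix.map_mul

theorem liftMat_transpose (M : Matrix (Fin p) (Fin q) k) :
    liftMat k (A := A) Mᵀ = (liftMat k M)ᵀ :=
  rfl

theorem map_liftMat (f : A →ₐ[k] C) (M : Matrix (Fin p) (Fin q) k) :
    (liftMat k (A := A) M).map f = liftMat k M := by
  ext; simp [liftMat]

theorem liftMat_liftMat {K : Type} [Field K] [Algebra k K] [Algebra K A] [IsScalarTower k K A]
    (M : Matrix (Fin p) (Fin q) k) :
    liftMat K (A := A) (liftMat k (A := K) M) = liftMat k M := by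
  ext; simp [liftMat, ← IsScalarTower.algebraMap_apply]

theorem trace_liftMat (M : Matrix (Fin p) (Fin p) k) :
    (liftMat k (A := A) M).trace = algebraMap k A M.trace :=
  (AddMonoidHom.map_trace (algebraMap k A) M).symm

theorem liftMat_mul_nonsing_inv {M : Matrix (Fin p) (Fin p) k} (hM : IsUnit M.det) :
    liftMat k (A := A) M * liftMat k (A := A) M⁻¹ = 1 := by
  rw [← liftMat_mul M, mul_nonsing_inv _ hM, liftMat_one]

theorem liftMat_nonsing_inv_mul {M : Matrix (Fin p) (Fin p) k} (hM : IsUnit M.det) :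
    liftMat k (A := A) M⁻¹ * liftMat k (A := A) M = 1 := by
  rw [← liftMat_mul M⁻¹, nonsing_inv_mul _ hM, liftMat_one]

theorem liftMat_nonsing_inv {K : Type} [Field K] [Algebra k K] {M : Matrix (Fin p) (Fin p) k}
    (hM : IsUnit M.det) : liftMat k (A := K) M⁻¹ = (liftMat k M)⁻¹ :=
  (inv_eq_left_inv (liftMat_nonsing_inv_mul hM)).symm

theorem isUnit_det_liftMat {K : Type} [Field K] [Algebra k K] {M : Matrix (Fin p) (Fin p) k}
    (hM : IsUnit M.det) : IsUnit (liftMat k (A := K) M).det :=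
  isUnit_det_of_left_inverse (liftMat_nonsing_inv_mul hM)

theorem trace_liftMat_mul_transpose_inv {K : Type} [Field K] [Algebra k K]
    {M : Matrix (Fin p) (Fin p) k} (hM : IsUnit M.det) :
    (liftMat k (A := K) M * (liftMat k (A := K) M)⁻¹ᵀ).trace = algebraMap k K (M * M⁻¹ᵀ).trace := by
  rw [← liftMat_nonsing_inv hM, ← liftMat_transpose, ← liftMat_mul, trace_liftMat]

end LiftMat

namespace BB

section IsPoint

variable {k} {A C : Type} [Semiring A] [Algebra k A] [Semiring C] [Algebra k C] {m n p : ℕ}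
  {E : Matrix (Fin m) (Fin m) k} {F : Matrix (Fin n) (Fin n) k} {G : Matrix (Fin p) (Fin p) k}
  {z : Matrix (Fin m) (Fin n) A}

theorem transpose_mul_liftMat_mul_apply (E : Matrix (Fin m) (Fin m) k)
    (z : Matrix (Fin m) (Fin n) A) (i j : Fin n) :
    (zᵀ * liftMat k (A := A) E * z) i j = evalForm E (fun a => z a i) (fun a => z a j) := by
  simp only [Matrix.mul_apply, transpose_apply, liftMat, map_apply, evalForm, Finset.sum_mul,
    ← Algebra.commutes, ← Algebra.smul_def, smul_mul_assoc]
  exact Finset.sum_comm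

theorem mul_liftMat_mul_transpose_apply (F : Matrix (Fin n) (Fin n) k)
    (z : Matrix (Fin m) (Fin n) A) (a b : Fin m) :
    (z * liftMat k (A := A) F * zᵀ) a b = evalForm F (z a) (z b) :=
  transpose_mul_liftMat_mul_apply F zᵀ a b

variable (E F z) in
/-- For invertible `E` and `F`, the matrices `z` over `A` that satisfy the defining relations of
`B(E,F)`, that is, the `A`-valued points of `B(E,F)`. The relations are solved for `F` and `E⁻¹`,
which makes them manifestly compatible with products and transposition. -/
structure IsPoint : Prop where
  transpose_mul_mul : zᵀ * liftMat k (A := A) E * z = liftMat k (A := A) F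
  mul_mul_transpose : z * liftMat k (A := A) F⁻¹ * zᵀ = liftMat k (A := A) E⁻¹

theorem isPoint_iff_relations (hE : IsUnit E.det) (hF : IsUnit F.det) :
    IsPoint E F z ↔ liftMat k (A := A) F⁻¹ * zᵀ * liftMat k (A := A) E * z = 1 ∧
      z * liftMat k (A := A) F⁻¹ * zᵀ * liftMat k (A := A) E = 1 := by
  constructor
  · rintro ⟨h₁, h₂⟩
    rw [Matrix.mul_assoc, Matrix.mul_assoc, ← Matrix.mul_assoc zᵀ, h₁, h₂,
      liftMat_nonsing_inv_mul hF, liftMat_nonsing_inv_mul hE]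
    exact ⟨rfl, rfl⟩
  · rintro ⟨h₁, h₂⟩
    constructor
    · calc zᵀ * liftMat k (A := A) E * z
          = liftMat k (A := A) F * (liftMat k (A := A) F⁻¹ * zᵀ * liftMat k (A := A) E * z) := by
            simp only [← Matrix.mul_assoc, liftMat_mul_nonsing_inv hF, Matrix.one_mul]
        _ = liftMat k (A := A) F := by rw [h₁, Matrix.mul_one]
    · calc z * liftMat k (A := A) F⁻¹ * zᵀ
          = z * liftMat k (A := A) F⁻¹ * zᵀ * liftMat k (A := A) E * liftMat k (A := A) E⁻¹ := by
            rw [Matrix.mul_assoc _ _ (liftMat k (A := A) E⁻¹), liftMat_mul_nonsing_inv hE,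
              Matrix.mul_one]
        _ = liftMat k (A := A) E⁻¹ := by rw [h₂, Matrix.one_mul]

theorem isPoint_iff_evalForm : IsPoint E F z ↔
    (∀ i j, evalForm E (fun a => z a i) (fun a => z a j) = algebraMap k A (F i j)) ∧
      ∀ a b, evalForm F⁻¹ (z a) (z b) = algebraMap k A (E⁻¹ a b) := by
  simp only [← transpose_mul_liftMat_mul_apply, ← mul_liftMat_mul_transpose_apply]
  exact ⟨fun h => ⟨fun i j => congrFun₂ h.1 i j, fun a b => congrFun₂ h.2 a b⟩,
    fun h => ⟨Matrix.ext h.1, Matrix.ext h.2⟩⟩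

namespace IsPoint

theorem map (h : IsPoint E F z) (f : A →ₐ[k] C) : IsPoint E F (z.map f) := by
  constructor
  · rw [← map_liftMat f, ← map_liftMat f, ← transpose_map, ← Matrix.map_mul, ← Matrix.map_mul,
      h.transpose_mul_mul]
  · rw [← map_liftMat f, ← map_liftMat f, ← transpose_map, ← Matrix.map_mul, ← Matrix.map_mul,
      h.mul_mul_transpose]

theorem mul_of_commute {w : Matrix (Fin n) (Fin p) A} (hz : IsPoint E F z) (hw : IsPoint F G w)
    (hzw : ∀ a i j s, Commute (z a i) (w j s)) : IsPoint E G (z * w) := by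
  have hT : (z * w)ᵀ = wᵀ * zᵀ := by
    ext s a
    simp only [transpose_apply, Matrix.mul_apply]
    exact Finset.sum_congr rfl fun i _ => hzw a i i s
  constructor
  · calc (z * w)ᵀ * liftMat k (A := A) E * (z * w)
        = wᵀ * (zᵀ * liftMat k (A := A) E * z) * w := by
          simp only [hT, Matrix.mul_assoc]
      _ = liftMat k (A := A) G := by rw [hz.transpose_mul_mul, hw.transpose_mul_mul]
  · calc z * w * liftMat k (A := A) G⁻¹ * (z * w)ᵀ
        = z * (w * liftMat k (A := A) G⁻¹ * wᵀ) * zᵀ := by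
          simp only [hT, Matrix.mul_assoc]
      _ = liftMat k (A := A) E⁻¹ := by rw [hw.mul_mul_transpose, hz.mul_mul_transpose]

theorem transpose (hE : IsUnit E.det) (hF : IsUnit F.det) (h : IsPoint E F z) :
    IsPoint F⁻¹ E⁻¹ zᵀ := by
  constructor
  · rw [transpose_transpose, h.mul_mul_transpose]
  · rw [transpose_transpose, nonsing_inv_nonsing_inv _ hE, nonsing_inv_nonsing_inv _ hF,
      h.transpose_mul_mul]

theorem op (h : IsPoint E F z) : IsPoint Eᵀ Fᵀ (z.map MulOpposite.op) := by
  obtain ⟨h₁, h₂⟩ := isPoint_iff_evalForm.1 h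
  refine isPoint_iff_evalForm.2 ⟨fun i j => ?_, fun a b => ?_⟩
  · exact (op_evalForm E _ _).symm.trans (congrArg MulOpposite.op (h₁ j i))
  · rw [← transpose_nonsing_inv, ← transpose_nonsing_inv]
    exact (op_evalForm F⁻¹ _ _).symm.trans (congrArg MulOpposite.op (h₂ b a))

theorem restrictScalars {K : Type} [Field K] [Algebra k K] [Algebra K A] [IsScalarTower k K A]
    (hE : IsUnit E.det) (hF : IsUnit F.det)
    (h : IsPoint (liftMat k (A := K) E) (liftMat k (A := K) F) z) : IsPoint E F z := by
  obtain ⟨h₁, h₂⟩ := h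
  rw [← liftMat_nonsing_inv hE, ← liftMat_nonsing_inv hF] at h₂
  simp only [liftMat_liftMat] at h₁ h₂
  exact ⟨h₁, h₂⟩

theorem of_congruence {P E' : Matrix (Fin m) (Fin m) k} (hP : IsUnit P.det)
    (h : Pᵀ * E * P = E') : IsPoint E E' (liftMat k (A := k) P) := by
  constructor
  · rw [← liftMat_transpose, ← liftMat_mul, ← liftMat_mul, h]
  · rw [← liftMat_transpose, ← liftMat_mul, ← liftMat_mul, ← h, Matrix.mul_inv_rev,
      Matrix.mul_inv_rev, ← Matrix.mul_assoc, mul_nonsing_inv _ hP, Matrix.one_mul,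
      Matrix.mul_assoc, nonsing_inv_mul _ (by rwa [det_transpose]), Matrix.mul_one]

theorem nontrivial [Nontrivial A] (hE : IsUnit E.det) (hF : IsUnit F.det) (h : IsPoint E F z) :
    Nontrivial (BB k E F) := by
  let φ : FreeAlgebra k (Fin m × Fin n) →ₐ[k] A := FreeAlgebra.lift k fun x => z x.1 x.2
  have hφ : (gens k m n).map φ = z := by ext; simp [φ, gens]
  have hφT : (gens k m n)ᵀ.map φ = zᵀ := by rw [transpose_map, hφ]
  have hrel : ∀ ⦃x y⦄, BRel k E F x y → φ x = φ y := by
    obtain ⟨h₁, h₂⟩ := (isPoint_iff_relations hE hF).1 h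
    rintro _ _ (⟨i, j⟩ | ⟨i, j⟩)
    · rw [← map_apply (f := φ), ← map_apply (f := φ)]
      simp only [Matrix.map_mul, hφ, hφT, map_liftMat, h₁, Matrix.map_one, map_zero, map_one]
    · rw [← map_apply (f := φ), ← map_apply (f := φ)]
      simp only [Matrix.map_mul, hφ, hφT, map_liftMat, h₂, Matrix.map_one, map_zero, map_one]
  exact (RingQuot.liftAlgHom k ⟨φ, hrel⟩).toRingHom.domain_nontrivial

end IsPoint

theorem isPoint_ZMat (hE : IsUnit E.det) (hF : IsUnit F.det) : IsPoint E F (ZMat k E F) := by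
  let R := FreeAlgebra k (Fin m × Fin n)
  let π := RingQuot.mkAlgHom k (BRel k E F)
  have hZ : (gens k m n).map π = ZMat k E F := rfl
  have hZT : (gens k m n)ᵀ.map π = (ZMat k E F)ᵀ := rfl
  refine (isPoint_iff_relations hE hF).2 ⟨?_, ?_⟩
  · have h : (liftMat k (A := R) F⁻¹ * (gens k m n)ᵀ * liftMat k (A := R) E * gens k m n).map π =
        Matrix.map 1 π := Matrix.ext fun i j => RingQuot.mkAlgHom_rel k (BRel.left i j)
    simpa only [Matrix.map_mul, hZ, hZT, map_liftMat, Matrix.map_one, map_zero, map_one] using h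
  · have h : (gens k m n * liftMat k (A := R) F⁻¹ * (gens k m n)ᵀ * liftMat k (A := R) E).map π =
        Matrix.map 1 π := Matrix.ext fun i j => RingQuot.mkAlgHom_rel k (BRel.right i j)
    simpa only [Matrix.map_mul, hZ, hZT, map_liftMat, Matrix.map_one, map_zero, map_one] using h

end IsPoint

section Nontrivial

variable {k} {m n p : ℕ} {E : Matrix (Fin m) (Fin m) k} {F : Matrix (Fin n) (Fin n) k}
  {G : Matrix (Fin p) (Fin p) k}

theorem nontrivial_of_congruence {P E' : Matrix (Fin m) (Fin m) k} (hE : IsUnit E.det)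
    (hP : IsUnit P.det) (h : Pᵀ * E * P = E') : Nontrivial (BB k E E') := by
  have hE' : IsUnit E'.det := by
    rw [← h, det_mul, det_mul, det_transpose]
    exact (hP.mul hE).mul hP
  exact (IsPoint.of_congruence hP h).nontrivial hE hE'

theorem nontrivial_trans (hE : IsUnit E.det) (hF : IsUnit F.det) (hG : IsUnit G.det)
    (hEF : Nontrivial (BB k E F)) (hFG : Nontrivial (BB k F G)) : Nontrivial (BB k E G) := by
  have hz := (isPoint_ZMat hE hF).map
    (Algebra.TensorProduct.includeLeft : BB k E F →ₐ[k] BB k E F ⊗[k] BB k F G)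
  have hw := (isPoint_ZMat hF hG).map
    (Algebra.TensorProduct.includeRight : BB k F G →ₐ[k] BB k E F ⊗[k] BB k F G)
  refine (hz.mul_of_commute hw fun a i j s => ?_).nontrivial hE hG
  simp [Commute, SemiconjBy]

-- Transposition turns points of `B(E,F)` into points of `B(ᵀF⁻¹, ᵀE⁻¹)` over the opposite algebra,
-- and `F` is congruent to `ᵀF⁻¹`.
theorem nontrivial_symm (hE : IsUnit E.det) (hF : IsUnit F.det)
    (hEF : Nontrivial (BB k E F)) : Nontrivial (BB k F E) := by
  have hET : IsUnit (E⁻¹ᵀ).det := by rw [det_transpose]; exact isUnit_nonsing_inv_det E hE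
  have hFT : IsUnit (F⁻¹ᵀ).det := by rw [det_transpose]; exact isUnit_nonsing_inv_det F hF
  have hF_FT : Nontrivial (BB k F F⁻¹ᵀ) :=
    nontrivial_of_congruence hF (isUnit_nonsing_inv_det F hF)
      (by rw [Matrix.mul_assoc, mul_nonsing_inv _ hF, Matrix.mul_one])
  have hFT_ET : Nontrivial (BB k F⁻¹ᵀ E⁻¹ᵀ) :=
    ((isPoint_ZMat hE hF).transpose hE hF).op.nontrivial hFT hET
  have hET_E : Nontrivial (BB k E⁻¹ᵀ E) :=
    nontrivial_of_congruence hET hE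
      (by rw [← transpose_mul, nonsing_inv_mul _ hE, transpose_one, Matrix.one_mul])
  exact nontrivial_trans hF hFT hE hF_FT (nontrivial_trans hFT hET hE hFT_ET hET_E)

theorem nontrivial_of_baseChange (K : Type) [Field K] [Algebra k K] (hE : IsUnit E.det)
    (hF : IsUnit F.det) [Nontrivial (BB K (liftMat k (A := K) E) (liftMat k (A := K) F))] :
    Nontrivial (BB k E F) :=
  (IsPoint.restrictScalars (K := K) hE hF
    (isPoint_ZMat (isUnit_det_liftMat hE) (isUnit_det_liftMat hF))).nontrivial hE hF

end Nontrivial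

end BB

theorem exists_quadratic_eq_zero_of_isAlgClosed {K : Type*} [Field K] [IsAlgClosed K] {a : K}
    (ha : a ≠ 0) (b c : K) : ∃ x, a * x ^ 2 + b * x + c = 0 := by
  obtain ⟨x, hx⟩ := IsAlgClosed.exists_root
    (Polynomial.C a * Polynomial.X ^ 2 + Polynomial.C b * Polynomial.X + Polynomial.C c)
    (by rw [Polynomial.degree_quadratic ha]; decide)
  exact ⟨x, by simpa [Polynomial.IsRoot] using hx⟩

section BilinearForms

variable {K V : Type*} [Field K] [AddCommGroup V] [Module K V] {B : LinearMap.BilinForm K V}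

theorem exists_isotropic_add_smul [IsAlgClosed K] {e : V} (he : B e e ≠ 0) (v : V) :
    ∃ s : K, B (v + s • e) (v + s • e) = 0 := by
  obtain ⟨s, hs⟩ := exists_quadratic_eq_zero_of_isAlgClosed he (B v e + B e v) (B v v)
  refine ⟨s, ?_⟩
  simp only [map_add, map_smul, LinearMap.add_apply, LinearMap.smul_apply, smul_eq_mul]
  linear_combination hs

theorem exists_isotropic_ne_zero [IsAlgClosed K] {e : V} (he : B e e ≠ 0)
    (hV : 1 < Module.finrank K V) : ∃ h : V, h ≠ 0 ∧ B h h = 0 := by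
  obtain ⟨v, hv⟩ : ∃ v, v ∉ K ∙ e := by
    by_contra! h
    exact hV.not_ge (finrank_le_one e fun v => Submodule.mem_span_singleton.1 (h v))
  obtain ⟨s, hs⟩ := exists_isotropic_add_smul he v
  refine ⟨v + s • e, fun h => hv ?_, hs⟩
  rw [eq_neg_of_add_eq_zero_left h]
  exact neg_mem (Submodule.smul_mem _ s (Submodule.mem_span_singleton_self e))

theorem exists_anisotropic [Nontrivial V] (hB : B.SeparatingLeft)
    (hiso : ∀ u v, B u u = 0 → B v v = 0 → B u v = 0) : ∃ e, B e e ≠ 0 := by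
  by_contra! h
  obtain ⟨v, hv⟩ := exists_ne (0 : V)
  exact hv (hB v fun w => hiso v w (h v) (h w))

/-- The Gram matrix of the nondegenerate planar forms whose isotropic vectors are pairwise
orthogonal, in a basis whose second vector is isotropic. For `c ≠ 0` the algebra
`B(jordanForm c, jordanForm c)` is the coordinate algebra of the Jordanian quantum `SL(2)`. -/
def jordanForm (c : K) : Matrix (Fin 2) (Fin 2) K := !![c, 1; -1, 0]

section OrthogonalIsotropicVectors

variable {e h : V}

theorem apply_ne_zero_of_isotropic [IsAlgClosed K] (hB : B.SeparatingLeft)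
    (hiso : ∀ u v, B u u = 0 → B v v = 0 → B u v = 0)
    (he : B e e ≠ 0) (hh : B h h = 0) (hh0 : h ≠ 0) : B h e ≠ 0 := by
  refine fun hhe => hh0 (hB h fun v => ?_)
  obtain ⟨s, hs⟩ := exists_isotropic_add_smul he v
  simpa [hhe] using hiso h _ hh hs

theorem apply_swap_eq_neg_of_isotropic
    (hiso : ∀ u v, B u u = 0 → B v v = 0 → B u v = 0)
    (hh : B h h = 0) (hhe : B h e ≠ 0) : B e h = -B h e := by
  by_contra hne
  have hsum : B e h + B h e ≠ 0 := fun hc => hne (eq_neg_of_add_eq_zero_left hc)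
  set s := -B e e / (B e h + B h e) with hs
  have hes : B (e + s • h) (e + s • h) = 0 := by
    simp only [map_add, map_smul, LinearMap.add_apply, LinearMap.smul_apply, smul_eq_mul, hh, hs]
    field_simp
    ring
  exact hhe (by simpa [hh] using hiso h _ hh hes)

theorem span_pair_eq_top_of_isotropic [IsAlgClosed K] (hB : B.SeparatingLeft)
    (hiso : ∀ u v, B u u = 0 → B v v = 0 → B u v = 0)
    (he : B e e ≠ 0) (hh : B h h = 0) (hhe : B h e ≠ 0) : Submodule.span K {e, h} = ⊤ := by
  refine eq_top_iff.2 fun v _ => Submodule.mem_span_pair.2 ?_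
  obtain ⟨s, hs⟩ := exists_isotropic_add_smul he v
  have hv : v + s • e - (B (v + s • e) e / B h e) • h = 0 := by
    refine hB _ fun w => ?_
    obtain ⟨t, ht⟩ := exists_isotropic_add_smul he w
    have hw : w = w + t • e - t • e := by simp
    rw [hw, map_sub, map_smul, map_sub, LinearMap.sub_apply, hiso _ _ hs ht, map_smul,
      LinearMap.smul_apply, hiso _ _ hh ht, LinearMap.sub_apply, LinearMap.smul_apply]
    simp [hhe]
  exact ⟨-s, B (v + s • e) e / B h e, by rw [← sub_eq_zero.1 hv]; module⟩

theorem linearIndependent_pair_of_isotropic (hh : B h h = 0) (hhe : B h e ≠ 0) :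
    LinearIndependent K ![e, h] := by
  refine LinearIndependent.pair_iff.2 fun s t hst => ?_
  have hs : s = 0 := by simpa [hh, hhe] using congrArg (B h) hst
  have ht : t = 0 := by simpa [hs, hhe] using congrArg (B · e) hst
  exact ⟨hs, ht⟩

end OrthogonalIsotropicVectors

theorem exists_basis_toMatrix_eq_jordanForm [IsAlgClosed K] (hB : B.SeparatingLeft)
    (hiso : ∀ u v, B u u = 0 → B v v = 0 → B u v = 0) (hV : 1 < Module.finrank K V) :
    ∃ (b : Module.Basis (Fin 2) K V) (c : K),
      LinearMap.BilinForm.toMatrix b B = jordanForm c := by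
  have : Nontrivial V := Module.nontrivial_of_finrank_pos (R := K) (by lia)
  obtain ⟨e, he⟩ := exists_anisotropic hB hiso
  obtain ⟨h₀, hh₀, hh₀h₀⟩ := exists_isotropic_ne_zero he hV
  have hh₀e : B h₀ e ≠ 0 := apply_ne_zero_of_isotropic hB hiso he hh₀h₀ hh₀
  obtain ⟨h, hh, hhe⟩ : ∃ h, B h h = 0 ∧ B h e = -1 :=
    ⟨(-(B h₀ e)⁻¹) • h₀, by simp [hh₀h₀], by simp [hh₀e]⟩
  have hhe0 : B h e ≠ 0 := by simp [hhe]
  have heh : B e h = 1 := by rw [apply_swap_eq_neg_of_isotropic hiso hh hhe0, hhe, neg_neg]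
  let b := Module.Basis.mk (linearIndependent_pair_of_isotropic hh hhe0)
    (by simpa [Set.pair_comm] using (span_pair_eq_top_of_isotropic hB hiso he hh hhe0).ge)
  refine ⟨b, B e e, ?_⟩
  ext i j
  fin_cases i <;> fin_cases j <;>
    simp [LinearMap.BilinForm.toMatrix_apply, b, jordanForm, hh, hhe, heh]

theorem isUnit_det_jordanForm (c : K) : IsUnit (jordanForm c).det := by
  simp [jordanForm]

theorem jordanForm_inv (c : K) : (jordanForm c)⁻¹ = !![0, -1; 1, c] :=
  inv_eq_left_inv (by simp [jordanForm, one_fin_two])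

theorem trace_mul_transpose_inv_jordanForm (c : K) :
    (jordanForm c * (jordanForm c)⁻¹ᵀ).trace = -2 := by
  rw [jordanForm_inv]
  simp only [jordanForm, trace_fin_two, Matrix.mul_apply, Fin.sum_univ_two, transpose_apply]
  norm_num

end BilinearForms

theorem trace_mul_transpose_inv_of_congruence {K ι : Type*} [CommRing K] [Fintype ι] [DecidableEq ι]
    {E P : Matrix ι ι K} (hP : IsUnit P.det) :
    (Pᵀ * E * P * (Pᵀ * E * P)⁻¹ᵀ).trace = (E * E⁻¹ᵀ).trace := by
  have hPT : IsUnit Pᵀ.det := by rwa [det_transpose]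
  have h : Pᵀ * E * P * (Pᵀ * E * P)⁻¹ᵀ = Pᵀ * (E * E⁻¹ᵀ) * Pᵀ⁻¹ := by
    simp only [Matrix.mul_inv_rev, transpose_mul, transpose_nonsing_inv, transpose_transpose,
      Matrix.mul_assoc, mul_nonsing_inv_cancel_left _ _ hP]
  rw [h, trace_mul_comm, ← Matrix.mul_assoc, nonsing_inv_mul _ hPT, Matrix.one_mul]

section QuantumForm

variable {K : Type*} [Field K] {q : K}

/-- The matrix `E_q` with `B(E_q, E_q) = O(SL_q(2))`, for which `tr(E_q · ᵀE_q⁻¹) = -(q + q⁻¹)`. -/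
def quantumForm (q : K) : Matrix (Fin 2) (Fin 2) K := !![0, 1; -q⁻¹, 0]

theorem isUnit_det_quantumForm (hq : q ≠ 0) : IsUnit (quantumForm q).det := by
  simp [quantumForm, hq]

theorem quantumForm_inv (hq : q ≠ 0) : (quantumForm q)⁻¹ = !![0, -q; 1, 0] :=
  inv_eq_left_inv (by simp [quantumForm, hq, one_fin_two])

theorem eq_one_of_add_inv_eq_two (hq : q ≠ 0) (h : q + q⁻¹ = 2) : q = 1 := by
  have hsq : (q - 1) ^ 2 = 0 := by
    field_simp at h
    linear_combination h
  exact sub_eq_zero.1 (pow_eq_zero_iff two_ne_zero |>.1 hsq)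

end QuantumForm

namespace WordFunction

section Operators

variable {K ι : Type*} [CommRing K]

variable (K) in
/-- The annihilation operator on functions of words that inserts the letter `b` in front of the
argument. -/
def lower (b : ι) : Module.End K (List ι → K) := LinearMap.funLeft K K (b :: ·)

theorem ext_lower {f g : List ι → K} (hnil : f [] = g [])
    (hlower : ∀ c, lower K c f = lower K c g) : f = g := by
  funext w
  cases w with
  | nil => exact hnil
  | cons c w => exact congrFun (hlower c) w

variable [Fintype ι] [DecidableEq ι] (E : Matrix ι ι K) (q : K) (lam : ι → K)

/-- The creation operators, in the form of the functionals `f ↦ raise E q lam b f w`, which are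
defined by recursion on the word `w`. -/
def raiseEval : List ι → ι → (List ι → K) →ₗ[K] K
  | [], b => lam b • LinearMap.proj []
  | a :: w, b => E⁻¹ a b • LinearMap.proj w + q • raiseEval w a ∘ₗ lower K b

/-- The creation operators: the only operators that `q`-commute with the annihilation operators in
the sense of `lower_mul_raise` and satisfy `raise E q lam b f [] = lam b * f []`. -/
def raise (b : ι) : Module.End K (List ι → K) := LinearMap.pi fun w => raiseEval E q lam w b

theorem raise_apply_nil (b : ι) (f : List ι → K) : raise E q lam b f [] = lam b * f [] := rfl

theorem lower_mul_raise (a b : ι) :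
    lower K a * raise E q lam b =
      algebraMap K _ (E⁻¹ a b) + q • (raise E q lam a * lower K b) := rfl

/-- The functions `f` such that `E(lower, lower) g = 0` and `E(raise, lower) g = g` for every
translate `g = f (u ++ ·)`. All annihilation and creation operators preserve this space, on which
they form the two columns of a point of `B(E, quantumForm q)`. -/
def relationModule : Submodule K (List ι → K) :=
  ⨅ u : List ι, (LinearMap.ker (evalForm E (lower K) (lower K)) ⊓
    LinearMap.ker (evalForm E (raise E q lam) (lower K) - 1)).comap
      (LinearMap.funLeft K K (u ++ ·))

variable {E q lam} {mu : ι → K} {f : List ι → K}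

theorem mem_relationModule : f ∈ relationModule E q lam ↔
    ∀ u : List ι, evalForm E (lower K) (lower K) (LinearMap.funLeft K K (u ++ ·) f) = 0 ∧
      evalForm E (raise E q lam) (lower K) (LinearMap.funLeft K K (u ++ ·) f) =
        LinearMap.funLeft K K (u ++ ·) f := by
  simp [relationModule, Submodule.mem_iInf, sub_eq_zero]

theorem evalForm_lower_lower (hf : f ∈ relationModule E q lam) :
    evalForm E (lower K) (lower K) f = 0 :=
  (mem_relationModule.1 hf []).1

theorem evalForm_raise_lower (hf : f ∈ relationModule E q lam) :
    evalForm E (raise E q lam) (lower K) f = f :=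
  (mem_relationModule.1 hf []).2

theorem lower_mem_relationModule (hf : f ∈ relationModule E q lam) (c : ι) :
    lower K c f ∈ relationModule E q lam :=
  mem_relationModule.2 fun u => mem_relationModule.1 hf (c :: u)

theorem prod_map_mem_relationModule (hE : IsUnit E.det) (hmu : evalForm E mu mu = 0)
    (hlam : evalForm E lam mu = 1) :
    (fun w : List ι => (w.map mu).prod) ∈ relationModule E q lam := by
  set f : List ι → K := fun w => (w.map mu).prod
  have hlower (a : ι) : lower K a f = mu a • f := by ext w; simp [lower, f]
  have hshift (u : List ι) : LinearMap.funLeft K K (u ++ ·) f = (u.map mu).prod • f := by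
    ext w; simp [f, LinearMap.funLeft_apply]
  have hxx : evalForm E (lower K) (lower K) f = 0 := by
    calc evalForm E (lower K) (lower K) f = evalForm E mu mu • f := by
          simp [evalForm, LinearMap.sum_apply, hlower, Finset.sum_smul, smul_smul, mul_comm]
      _ = 0 := by rw [hmu, zero_smul]
  have hyx : evalForm E (raise E q lam) (lower K) f = f := by
    refine ext_lower ?_ fun c => ?_
    · calc evalForm E (raise E q lam) (lower K) f [] = evalForm E lam mu * f [] := by
            simp [evalForm, LinearMap.sum_apply, hlower, raise_apply_nil, Finset.sum_mul, mul_assoc,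
              mul_left_comm]
        _ = f [] := by rw [hlam, one_mul]
    · rw [← Module.End.mul_apply, mul_evalForm_of_qCommute hE (lower_mul_raise E q lam),
        LinearMap.add_apply, LinearMap.smul_apply, Module.End.mul_apply, hxx, map_zero, smul_zero,
        add_zero]
  exact mem_relationModule.2 fun u => by simp only [hshift, map_smul, hxx, hyx, smul_zero, and_self]

theorem nontrivial_relationModule [Nontrivial K] (hE : IsUnit E.det) (hmu : evalForm E mu mu = 0)
    (hlam : evalForm E lam mu = 1) : Nontrivial (relationModule E q lam) :=
  Submodule.nontrivial_iff_ne_bot.2 <| (Submodule.ne_bot_iff _).2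
    ⟨_, prod_map_mem_relationModule hE hmu hlam, fun h => by simpa using congrFun h []⟩

end Operators

section Trace

variable {K ι : Type*} [Field K] [Fintype ι] [DecidableEq ι] {E : Matrix ι ι K} {q : K}
  {lam : ι → K} {f : List ι → K}

theorem evalForm_lower_raise (htr : (E * E⁻¹ᵀ).trace = -(q + q⁻¹))
    (hf : f ∈ relationModule E q lam) :
    evalForm E (lower K) (raise E q lam) f = -q⁻¹ • f := by
  rw [evalForm_swap_of_qCommute (lower_mul_raise E q lam), htr, LinearMap.add_apply,
    LinearMap.smul_apply, evalForm_raise_lower hf, Module.algebraMap_end_apply]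
  module

theorem evalForm_raise_raise (hE : IsUnit E.det) (hq : q ≠ 0)
    (htr : (E * E⁻¹ᵀ).trace = -(q + q⁻¹)) (hlam : evalForm E lam lam = 0)
    (hf : f ∈ relationModule E q lam) : evalForm E (raise E q lam) (raise E q lam) f = 0 := by
  refine ext_lower ?_ fun c => ?_
  · calc evalForm E (raise E q lam) (raise E q lam) f [] = evalForm E lam lam * f [] := by
          simp [evalForm, LinearMap.sum_apply, raise_apply_nil, Finset.sum_mul, mul_assoc]
      _ = 0 := by rw [hlam, zero_mul]
  · rw [← Module.End.mul_apply, mul_evalForm_of_qCommute hE (lower_mul_raise E q lam),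
      LinearMap.add_apply, LinearMap.smul_apply, Module.End.mul_apply,
      evalForm_lower_raise htr hf, map_smul, smul_smul, mul_neg, mul_inv_cancel₀ hq]
    simp

theorem raise_mem_relationModule (hE : IsUnit E.det) (hq : q ≠ 0)
    (htr : (E * E⁻¹ᵀ).trace = -(q + q⁻¹)) (hlam : evalForm E lam lam = 0)
    (hf : f ∈ relationModule E q lam) (c : ι) : raise E q lam c f ∈ relationModule E q lam := by
  have hxy := lower_mul_raise E q lam
  refine mem_relationModule.2 fun u => ?_
  induction u generalizing f c with
  | nil =>
    have hfc := lower_mem_relationModule hf c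
    constructor
    · change (evalForm E (lower K) (lower K) * raise E q lam c) f = 0
      rw [evalForm_mul_of_qCommute hE hxy, LinearMap.add_apply, LinearMap.smul_apply,
        Module.End.mul_apply, evalForm_lower_raise htr hfc, smul_smul, mul_neg, mul_inv_cancel₀ hq,
        neg_one_smul, add_neg_cancel]
    · change (evalForm E (raise E q lam) (lower K) * raise E q lam c) f = raise E q lam c f
      rw [evalForm_mul_of_qCommute hE hxy, LinearMap.add_apply, LinearMap.smul_apply,
        Module.End.mul_apply, evalForm_raise_raise hE hq htr hlam hfc, smul_zero, add_zero]
  | cons d u ih =>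
    have hcons : LinearMap.funLeft K K (d :: u ++ ·) (raise E q lam c f) =
        E⁻¹ d c • LinearMap.funLeft K K (u ++ ·) f +
          q • LinearMap.funLeft K K (u ++ ·) (raise E q lam d (lower K c f)) := rfl
    obtain ⟨hf₁, hf₂⟩ := mem_relationModule.1 hf u
    obtain ⟨ih₁, ih₂⟩ := ih (lower_mem_relationModule hf c) d
    rw [hcons]
    simp only [map_add, map_smul, hf₁, hf₂, ih₁, ih₂, smul_zero, add_zero, and_self]

end Trace

end WordFunction

namespace BB

section IsotropicPair

variable {K : Type} [Field K] {m : ℕ} {E : Matrix (Fin m) (Fin m) K} {q : K}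

theorem IsPoint.of_qCommute {A : Type} [Ring A] [Algebra K A] {x y : Fin m → A} (hq : q ≠ 0)
    (hcomm : ∀ a b, x a * y b = algebraMap K A (E⁻¹ a b) + q • (y a * x b))
    (hyy : evalForm E y y = 0) (hyx : evalForm E y x = 1)
    (hxy : evalForm E x y = algebraMap K A (-q⁻¹)) (hxx : evalForm E x x = 0) :
    IsPoint E (quantumForm q) (Matrix.of fun a => ![y a, x a]) := by
  refine isPoint_iff_evalForm.2 ⟨fun i j => ?_, fun a b => ?_⟩
  · fin_cases i <;> fin_cases j <;> simp [quantumForm, hyy, hyx, hxy, hxx]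
  · simp [evalForm, quantumForm_inv hq, hcomm]

open WordFunction in
theorem nontrivial_quantumForm_of_isotropic_pair (hE : IsUnit E.det) (hq : q ≠ 0)
    (htr : (E * E⁻¹ᵀ).trace = -(q + q⁻¹)) {lam mu : Fin m → K}
    (hlam : evalForm E lam lam = 0) (hmu : evalForm E mu mu = 0) (hlm : evalForm E lam mu = 1) :
    Nontrivial (BB K E (quantumForm q)) := by
  let S := relationModule E q lam
  have : Nontrivial S := nontrivial_relationModule hE hmu hlm
  have hlower (a : Fin m) (f) (hf : f ∈ S) : lower K a f ∈ S := lower_mem_relationModule hf a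
  have hraise (a : Fin m) (f) (hf : f ∈ S) : raise E q lam a f ∈ S :=
    raise_mem_relationModule hE hq htr hlam hf a
  let x (a : Fin m) : Module.End K S := (lower K a).restrict (hlower a)
  let y (a : Fin m) : Module.End K S := (raise E q lam a).restrict (hraise a)
  refine (IsPoint.of_qCommute (x := x) (y := y) hq ?_ ?_ ?_ ?_ ?_).nontrivial hE
    (isUnit_det_quantumForm hq)
  · exact fun a b => LinearMap.ext fun f => Subtype.ext <|
      LinearMap.congr_fun (lower_mul_raise E q lam a b) f
  all_goals ext1 f; refine Subtype.ext ((evalForm_restrict_apply E _ _ f).trans ?_)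
  · exact evalForm_raise_raise hE hq htr hlam f.2
  · exact evalForm_raise_lower f.2
  · exact evalForm_lower_raise htr f.2
  · exact evalForm_lower_lower f.2

end IsotropicPair

theorem nontrivial_jordanForm_quantumForm_one {K : Type} [Field K] (c : K) :
    Nontrivial (BB K (jordanForm c) (quantumForm 1)) := by
  -- `h` is inverse to `g`, and `x` is chosen so that `x * g - g * x = c • g ^ 2`.
  let g : Module.End K (ℤ → K) := LinearMap.funLeft K K (· + 1)
  let h : Module.End K (ℤ → K) := LinearMap.funLeft K K (· - 1)
  let x : Module.End K (ℤ → K) := LinearMap.mulLeft K (fun i : ℤ => -c * i) * g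
  have hz : IsPoint (jordanForm c) (quantumForm 1) !![g, 0; x, h] := by
    refine isPoint_iff_evalForm.2 ⟨fun i j => ?_, fun i j => ?_⟩
    · fin_cases i <;> fin_cases j <;> ext f n <;>
        simp [evalForm, jordanForm, quantumForm, g, h, x, LinearMap.funLeft_apply]
      ring
    · rw [quantumForm_inv one_ne_zero, jordanForm_inv]
      fin_cases i <;> fin_cases j <;> ext f n <;>
        simp [evalForm, g, h, x, LinearMap.funLeft_apply]
      ring
  exact hz.nontrivial (isUnit_det_jordanForm c) (isUnit_det_quantumForm one_ne_zero)

section IsAlgClosed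

variable {K : Type} [Field K] [IsAlgClosed K] {m n : ℕ} {E : Matrix (Fin m) (Fin m) K}
  {F : Matrix (Fin n) (Fin n) K} {q : K}

theorem nontrivial_quantumForm_of_isotropic_orthogonal (hm : 2 ≤ m) (hE : IsUnit E.det)
    (hiso : ∀ u v : Fin m → K, evalForm E u u = 0 → evalForm E v v = 0 → evalForm E u v = 0)
    (hq : q ≠ 0) (htr : (E * E⁻¹ᵀ).trace = -(q + q⁻¹)) : Nontrivial (BB K E (quantumForm q)) := by
  simp only [← toBilin'_eq_evalForm] at hiso
  obtain ⟨b, c, hbc⟩ := exists_basis_toMatrix_eq_jordanForm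
    (LinearMap.BilinForm.nondegenerate_toBilin'_iff_det_ne_zero.2 hE.ne_zero).1 hiso
    (by rwa [Module.finrank_fin_fun])
  obtain rfl : m = 2 := by simpa using Module.finrank_eq_card_basis b
  set P := (Pi.basisFun K (Fin 2)).toMatrix b
  have hP : IsUnit P.det :=
    isUnit_det_of_right_inverse (Module.Basis.toMatrix_mul_toMatrix_flip _ b)
  have hPE : Pᵀ * E * P = jordanForm c := by
    rw [← hbc, ← LinearMap.BilinForm.toMatrix_mul_basis_toMatrix (Pi.basisFun K (Fin 2)),
      LinearMap.BilinForm.toMatrix_basisFun, LinearMap.BilinForm.toMatrix'_toBilin']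
  obtain rfl : q = 1 := by
    refine eq_one_of_add_inv_eq_two hq (neg_injective ?_)
    rw [← htr, ← trace_mul_transpose_inv_of_congruence hP, hPE,
      trace_mul_transpose_inv_jordanForm]
  exact nontrivial_trans hE (isUnit_det_jordanForm c) (isUnit_det_quantumForm hq)
    (nontrivial_of_congruence hE hP hPE) (nontrivial_jordanForm_quantumForm_one c)

theorem nontrivial_quantumForm (hm : 2 ≤ m) (hE : IsUnit E.det) (hq : q ≠ 0)
    (htr : (E * E⁻¹ᵀ).trace = -(q + q⁻¹)) : Nontrivial (BB K E (quantumForm q)) := by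
  by_cases hiso : ∀ u v : Fin m → K,
      evalForm E u u = 0 → evalForm E v v = 0 → evalForm E u v = 0
  · exact nontrivial_quantumForm_of_isotropic_orthogonal hm hE hiso hq htr
  · push Not at hiso
    obtain ⟨u, v, hu, hv, huv⟩ := hiso
    refine nontrivial_quantumForm_of_isotropic_pair (lam := (evalForm E u v)⁻¹ • u) hE hq htr
      ?_ hv ?_
    · simp only [← toBilin'_eq_evalForm] at hu ⊢
      simp [hu]
    · simp only [← toBilin'_eq_evalForm] at huv ⊢
      simp [huv]

theorem nontrivial_of_trace_eq (hm : 2 ≤ m) (hn : 2 ≤ n) (hE : IsUnit E.det) (hF : IsUnit F.det)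
    (htr : (E * E⁻¹ᵀ).trace = (F * F⁻¹ᵀ).trace) : Nontrivial (BB K E F) := by
  obtain ⟨q, hq⟩ := exists_quadratic_eq_zero_of_isAlgClosed one_ne_zero (E * E⁻¹ᵀ).trace 1
  have hq0 : q ≠ 0 := by rintro rfl; simp at hq
  have hqtr : (E * E⁻¹ᵀ).trace = -(q + q⁻¹) := by
    field_simp
    linear_combination hq
  have hQ := isUnit_det_quantumForm hq0
  exact nontrivial_trans hE hQ hF (nontrivial_quantumForm hm hE hq0 hqtr)
    (nontrivial_symm hF hQ (nontrivial_quantumForm hn hF hq0 (htr ▸ hqtr)))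

end IsAlgClosed

end BB

/-- **Statement 13.** If `tr(E·ᵀE⁻¹) = tr(F·ᵀF⁻¹)` then `B(E,F)` is non-zero. -/
theorem BB_nonzero_of_trace_eq {m n : ℕ} (hm : 2 ≤ m) (hn : 2 ≤ n)
    (E : Matrix (Fin m) (Fin m) k) (F : Matrix (Fin n) (Fin n) k)
    (hE : IsUnit E.det) (hF : IsUnit F.det)
    (htr : (E * E⁻¹ᵀ).trace = (F * F⁻¹ᵀ).trace) :
    (1 : BB k E F) ≠ 0 := by
  let K := AlgebraicClosure k
  have htrK : (liftMat k (A := K) E * (liftMat k (A := K) E)⁻¹ᵀ).trace =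
      (liftMat k (A := K) F * (liftMat k (A := K) F)⁻¹ᵀ).trace := by
    rw [trace_liftMat_mul_transpose_inv hE, trace_liftMat_mul_transpose_inv hF, htr]
  have : Nontrivial (BB K (liftMat k (A := K) E) (liftMat k (A := K) F)) :=
    BB.nontrivial_of_trace_eq hm hn (isUnit_det_liftMat hE) (isUnit_det_liftMat hF) htrK
  have := BB.nontrivial_of_baseChange K hE hF
  exact one_ne_zero
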